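/- Assume (Φ1). Then the functions g and h are continuously differentiable on ℝ, vanish for y ≤ 0, are strictly increasing on [0,∞), and satisfy g(y) → ∞ and h(y) → ∞ as y → ∞; in particular the restriction of g to [0,∞) is a continuous strictly increasing bijection onto [0,∞). The macroscopic equation of state P := P_Φ := h ∘ (g|_{[0,∞)})⁻¹ satisfies: P ∈ C¹([0,∞)) with P(0) = 0; 0 < P′(ρ) < 1/3 for all ρ > 0; there exists a constant C > 0 (depending only on Φ) with |P(ρ) − ρ/3| ≤ C ρ^{1/2} for all ρ ≥ 0; and P : [0,∞) → [0,∞) is a bijection whose inverse satisfies |P⁻¹(q) − 3q| ≤ C q^{1/2} for all q > 0. -/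

import Mathlib

open MeasureTheory

noncomputable section

/-- The macroscopic energy density `g(y)` induced by the microscopic ansatz `Φ` (extended by
`0` for `y ≤ 0`). -/
def gfun (Φ : ℝ → ℝ) (y : ℝ) : ℝ :=
  if y ≤ 0 then 0 else
    4 * Real.pi * Real.exp (4 * y) *
      ∫ η in (0:ℝ)..(1 - Real.exp (-y)),
        Φ η * (1 - η) ^ 2 * Real.sqrt ((1 - η) ^ 2 - Real.exp (-2 * y))

/-- The macroscopic pressure `h(y)` induced by the microscopic ansatz `Φ` (extended by `0` for
`y ≤ 0`). -/
def hfun (Φ : ℝ → ℝ) (y : ℝ) : ℝ :=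
  if y ≤ 0 then 0 else
    4 * Real.pi / 3 * Real.exp (4 * y) *
      ∫ η in (0:ℝ)..(1 - Real.exp (-y)),
        Φ η * Real.sqrt ((1 - η) ^ 2 - Real.exp (-2 * y)) ^ 3

/-!
With `η = 1 - e⁻ˢ` the functions `g` and `h` become convolutions `ψ ⋆ E` and `ψ ⋆ Π` of the causal
profile `ψ s = Φ (1 - e⁻ˢ)` with explicit kernels in the energy `eᵗ` and the momentum
`p = √(e²ᵗ - 1)` of a particle. Since `Π' = E + Π` on `(0, ∞)`, `h' = g + h`. The kernel
`E - 3Π = 4π eᵗ p` of the trace `g - 3h` has a positive, integrably singular derivative, so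
`τ := (g - 3h)'` is continuous and positive on `(0, ∞)`. Hence `g' = 3(g + h) + τ` and
`P' ∘ g = (g + h) / (3(g + h) + τ)` lies in `(0, 1/3)`; it tends to `0` at `0` because
`E + Π ≤ 4/3 (e²ᵗ - 1) (E - 3Π)'`. Finally `|ρ - 3P| = g - 3h` is `O(√h)`: for small `y` because
`((g - 3h)²)' = 2(g - 3h)τ` is bounded by a multiple of `h' ≥ g - 3h`, and for large `y` because
`g - 3h = O(e²ʸ)` while `h` grows at least like `e⁴ʸ`.
-/

open Set Filter Topology
open scoped Convolution

/-! ### Convolutions with causal kernels -/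

/-- A function of time that vanishes up to time `0`, so that a convolution of two such functions
at `y` only involves the times in `(0, y)`. -/
def Causal (f : ℝ → ℝ) : Prop := ∀ t ≤ 0, f t = 0

namespace Causal

variable {f k : ℝ → ℝ}

lemma add (hf : Causal f) (hk : Causal k) : Causal (f + k) := fun t ht => by
  rw [Pi.add_apply, hf t ht, hk t ht, add_zero]

lemma norm (hf : Causal f) : Causal fun t => ‖f t‖ := fun t ht => norm_eq_zero.2 (hf t ht)

lemma mul_comp_sub_eq_zero (hf : Causal f) (hk : Causal k) {y s : ℝ} (hs : s ∉ Ioc 0 y) :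
    f s * k (y - s) = 0 := by
  rcases le_or_gt s 0 with h | h
  · rw [hf s h, zero_mul]
  · rw [hk (y - s) (sub_nonpos.2 (not_le.1 fun h' => hs ⟨h, h'⟩).le), mul_zero]

lemma convolution_eq_intervalIntegral (hf : Causal f) (hk : Causal k) {y : ℝ} (hy : 0 ≤ y) :
    (f ⋆ k) y = ∫ s in (0 : ℝ)..y, f s * k (y - s) := by
  rw [intervalIntegral.integral_of_le hy, convolution_lsmul]
  exact (setIntegral_eq_integral_of_forall_compl_eq_zero fun _ hs =>
    hf.mul_comp_sub_eq_zero hk hs).symm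

lemma convolution (hf : Causal f) (hk : Causal k) : Causal (f ⋆ k) := fun y hy => by
  rw [convolution_lsmul, ← integral_zero ℝ ℝ]
  exact integral_congr_ae (.of_forall fun s =>
    hf.mul_comp_sub_eq_zero hk fun hs => (hs.1.trans_le hs.2).not_ge hy)

lemma locallyIntegrable (hk : Causal k) (hki : ∀ b, IntegrableOn k (Ioc 0 b)) :
    LocallyIntegrable k := by
  refine locallyIntegrable_iff.2 fun s hs => ?_
  obtain ⟨b, hb⟩ := hs.bddAbove
  refine ((hki b).mono_set inter_subset_right).of_forall_sdiff_eq_zero (s := s ∩ Ioc 0 b)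
    hs.measurableSet fun t ht => ?_
  exact hk t (not_lt.1 fun h0 => ht.2 ⟨ht.1, h0, hb ht.1⟩)

lemma integrable_indicator_Iic (hk : Causal k) (hki : LocallyIntegrable k) (b : ℝ) :
    Integrable ((Iic b).indicator k) := by
  have hIcc : IntegrableOn k (Icc 0 b) := hki.integrableOn_isCompact isCompact_Icc
  refine (hIcc.integrable_indicator measurableSet_Icc).congr (.of_forall fun t => ?_)
  rcases le_or_gt t 0 with ht | ht
  · simp only [indicator_apply, hk t ht, ite_self]
  · simp only [indicator_apply, mem_Icc, ht.le, true_and, mem_Iic]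

lemma convolution_indicator_Iic (hf : Causal f) {y b : ℝ} (hy : y ≤ b) :
    (f ⋆ (Iic b).indicator k) y = (f ⋆ k) y := by
  simp only [convolution_lsmul]
  refine integral_congr_ae (.of_forall fun s => ?_)
  rcases le_or_gt s 0 with hs | hs
  · simp only [hf s hs, zero_smul]
  · simp only [indicator_of_mem (show y - s ∈ Iic b by rw [mem_Iic]; linarith)]

end Causal

lemma convolution_real_comm (f k : ℝ → ℝ) : f ⋆ k = k ⋆ f := by
  have h := convolution_flip (f := k) (g := f) (μ := volume) (ContinuousLinearMap.mul ℝ ℝ)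
  rwa [ContinuousLinearMap.flip_mul] at h

lemma convolutionExistsAt_real_comm {f k : ℝ → ℝ} {y : ℝ} :
    ConvolutionExistsAt f k y (ContinuousLinearMap.lsmul ℝ ℝ) ↔
      ConvolutionExistsAt k f y (ContinuousLinearMap.lsmul ℝ ℝ) := by
  have h := convolutionExistsAt_flip (f := k) (g := f) (x := y) (μ := volume)
    (L := ContinuousLinearMap.mul ℝ ℝ)
  rwa [ContinuousLinearMap.flip_mul] at h

lemma convolutionExistsAt_of_norm_le {f k : ℝ → ℝ} {M : ℝ} (hfm : Measurable f)
    (hfM : ∀ t, ‖f t‖ ≤ M) (hk : Integrable k) (y : ℝ) :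
    ConvolutionExistsAt f k y (ContinuousLinearMap.lsmul ℝ ℝ) :=
  (hk.comp_sub_left y).bdd_mul hfm.aestronglyMeasurable (.of_forall hfM)

-- The convolutions of `f` with `L¹`-approximations of `k` converge uniformly.
lemma continuous_convolution_of_norm_le {f k : ℝ → ℝ} {M : ℝ} (hfm : Measurable f)
    (hfM : ∀ t, ‖f t‖ ≤ M) (hk : Integrable k) : Continuous (f ⋆ k) := by
  have hM : 0 ≤ M := (norm_nonneg _).trans (hfM 0)
  have hfl : LocallyIntegrable f := (locallyIntegrable_const M).mono hfm.aestronglyMeasurable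
    (.of_forall fun t => (hfM t).trans (le_abs_self M))
  refine continuous_of_uniform_approx_of_continuous fun u hu => ?_
  obtain ⟨ε, hε, hεu⟩ := Metric.mem_uniformity_dist.1 hu
  obtain ⟨φ, hφc, hφk, hφ, hφi⟩ :=
    hk.exists_hasCompactSupport_integral_sub_le (div_pos hε (by positivity : 0 < M + 1))
  refine ⟨f ⋆ φ, hφc.continuous_convolution_right _ hfl hφ, fun y => hεu ?_⟩
  have hsub : (f ⋆ k) y - (f ⋆ φ) y = ∫ s, f s * (k (y - s) - φ (y - s)) := by
    simp only [convolution_lsmul, smul_eq_mul, mul_sub]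
    exact (integral_sub (convolutionExistsAt_of_norm_le hfm hfM hk y)
      (convolutionExistsAt_of_norm_le hfm hfM hφi y)).symm
  calc dist ((f ⋆ k) y) ((f ⋆ φ) y) = ‖∫ s, f s * (k (y - s) - φ (y - s))‖ := by
        rw [Real.dist_eq, hsub, Real.norm_eq_abs]
    _ ≤ ∫ s, M * ‖k (y - s) - φ (y - s)‖ :=
        norm_integral_le_of_norm_le (((hk.sub hφi).norm.comp_sub_left y).const_mul M)
          (.of_forall fun s => by rw [norm_mul]; gcongr; exact hfM s)
    _ = M * ∫ t, ‖k t - φ t‖ := by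
        rw [integral_const_mul, integral_sub_left_eq_self (fun t => ‖k t - φ t‖) volume y]
    _ ≤ M * (ε / (M + 1)) := by gcongr
    _ < ε := by
        rw [mul_div_assoc', div_lt_iff₀ (by positivity)]
        linarith

/-- A bounded measurable causal function: the class against which every causal locally integrable
kernel can be convolved. -/
structure BoundedCausal (f : ℝ → ℝ) : Prop where
  causal : Causal f
  measurable : Measurable f
  bounded : ∃ M, ∀ t, ‖f t‖ ≤ M

namespace BoundedCausal

variable {f k k₁ k₂ : ℝ → ℝ}

lemma norm (hf : BoundedCausal f) : BoundedCausal fun t => ‖f t‖ where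
  causal := hf.causal.norm
  measurable := hf.measurable.norm
  bounded := hf.bounded.imp fun _ hM t => (norm_norm _).trans_le (hM t)

lemma convolutionExistsAt (hf : BoundedCausal f) (hk : Causal k) (hki : LocallyIntegrable k)
    (y : ℝ) : ConvolutionExistsAt f k y (ContinuousLinearMap.lsmul ℝ ℝ) := by
  obtain ⟨M, hM⟩ := hf.bounded
  refine (convolutionExistsAt_of_norm_le hf.measurable hM
    (hk.integrable_indicator_Iic hki y) y).congr (.of_forall fun s => ?_)
  rcases le_or_gt s 0 with hs | hs
  · simp only [hf.causal s hs, map_zero, zero_apply]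
  · simp only [indicator_of_mem (show y - s ∈ Iic y by rw [mem_Iic]; linarith)]

lemma continuous_convolution (hf : BoundedCausal f) (hk : Causal k)
    (hki : LocallyIntegrable k) : Continuous (f ⋆ k) := by
  obtain ⟨M, hM⟩ := hf.bounded
  refine continuous_iff_continuousAt.2 fun y => ?_
  exact (continuous_convolution_of_norm_le hf.measurable hM
    (hk.integrable_indicator_Iic hki (y + 1))).continuousAt.congr <|
      (eventually_le_nhds (lt_add_one y)).mono fun _ hz => hf.causal.convolution_indicator_Iic hz

lemma convolution_le_mul_convolution (hf : BoundedCausal f) (hf₀ : ∀ t, 0 ≤ f t)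
    (hk₁ : Causal k₁) (hk₁i : LocallyIntegrable k₁) (hk₂ : Causal k₂)
    (hk₂i : LocallyIntegrable k₂) {c y : ℝ} (hle : ∀ t < y, k₁ t ≤ c * k₂ t) :
    (f ⋆ k₁) y ≤ c * (f ⋆ k₂) y := by
  simp only [convolution_lsmul, smul_eq_mul]
  rw [← integral_const_mul]
  refine integral_mono (hf.convolutionExistsAt hk₁ hk₁i y)
    ((hf.convolutionExistsAt hk₂ hk₂i y).const_mul c) fun s => ?_
  rcases le_or_gt s 0 with hs | hs
  · simp only [hf.causal s hs, zero_mul, mul_zero, le_refl]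
  · calc f s * k₁ (y - s) ≤ f s * (c * k₂ (y - s)) := by
          gcongr
          exacts [hf₀ s, hle _ (by linarith)]
      _ = c * (f s * k₂ (y - s)) := by ring

lemma convolution_pos (hf : BoundedCausal f) (hf₀ : ∀ t, 0 ≤ f t)
    (hfpos : ∀ᶠ t in 𝓝[>] 0, 0 < f t) (hk : Causal k) (hki : LocallyIntegrable k)
    (hkpos : ∀ t, 0 < t → 0 < k t) {y : ℝ} (hy : 0 < y) : 0 < (f ⋆ k) y := by
  have hk₀ : ∀ t, 0 ≤ k t := fun t =>
    (le_or_gt t 0).elim (fun ht => (hk t ht).ge) fun ht => (hkpos t ht).le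
  obtain ⟨ε, hε, hfε⟩ := mem_nhdsGT_iff_exists_Ioo_subset.1 hfpos
  rw [convolution_lsmul]
  refine (integral_pos_iff_support_of_nonneg (fun s => mul_nonneg (hf₀ s) (hk₀ _))
    (hf.convolutionExistsAt hk hki y)).2 ?_
  have hsub : Ioo 0 (min ε y) ⊆ Function.support fun s => f s * k (y - s) := fun s hs =>
    (mul_pos (hfε ⟨hs.1, hs.2.trans_le (min_le_left _ _)⟩)
      (hkpos _ (sub_pos.2 (hs.2.trans_le (min_le_right _ _))))).ne'
  exact (isOpen_Ioo.measure_pos volume (nonempty_Ioo.2 (lt_min hε hy))).trans_le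
    (measure_mono hsub)

end BoundedCausal

/-- The Heaviside function, with value `0` at `0`. Convolution with it is integration from `0`. -/
def heaviside : ℝ → ℝ := (Ioi 0).indicator 1

lemma boundedCausal_heaviside : BoundedCausal heaviside where
  causal _ ht := indicator_of_notMem (notMem_Ioi.2 ht) _
  measurable := measurable_one.indicator measurableSet_Ioi
  bounded := ⟨1, fun _ => (norm_indicator_le_norm_self _ _).trans norm_one.le⟩

lemma heaviside_of_pos {t : ℝ} (ht : 0 < t) : heaviside t = 1 := indicator_of_mem ht _

namespace Causal

variable {k : ℝ → ℝ}

lemma convolution_heaviside (hk : Causal k) (y : ℝ) :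
    (k ⋆ heaviside) y = ∫ t in (0 : ℝ)..y, k t := by
  rcases le_or_gt y 0 with hy | hy
  · rw [hk.convolution boundedCausal_heaviside.causal y hy]
    refine (intervalIntegral.integral_zero_ae (.of_forall fun t ht => hk t ?_)).symm
    exact (uIoc_of_ge hy ▸ ht).2
  · rw [hk.convolution_eq_intervalIntegral boundedCausal_heaviside.causal hy.le,
      intervalIntegral.integral_of_le hy.le, intervalIntegral.integral_of_le hy.le,
      integral_Ioc_eq_integral_Ioo, integral_Ioc_eq_integral_Ioo]
    refine setIntegral_congr_fun measurableSet_Ioo fun t ht => ?_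
    simp only [heaviside_of_pos (sub_pos.2 ht.2), mul_one]

lemma hasDerivAt_convolution_heaviside (hk : Causal k) (hkc : Continuous k) (y : ℝ) :
    HasDerivAt (k ⋆ heaviside) (k y) y :=
  (hkc.integral_hasStrictDerivAt 0 y).hasDerivAt.congr_of_eventuallyEq
    (.of_forall hk.convolution_heaviside)

end Causal

namespace BoundedCausal

variable {f k : ℝ → ℝ}

lemma convolution_assoc_heaviside (hf : BoundedCausal f) (hk : Causal k)
    (hki : LocallyIntegrable k) : (f ⋆ k) ⋆ heaviside = f ⋆ (k ⋆ heaviside) := by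
  have hH := boundedCausal_heaviside.norm
  have hki' : LocallyIntegrable fun t => ‖k t‖ := locallyIntegrable_iff.2 fun s hs =>
    (hki.integrableOn_isCompact hs).norm
  have hkH : Continuous ((fun t => ‖k t‖) ⋆ fun t => ‖heaviside t‖) := by
    rw [convolution_real_comm]
    exact hH.continuous_convolution hk.norm hki'
  funext y
  refine convolution_assoc _ _ _ _ (fun a b c => smul_assoc a b c)
    hf.measurable.aestronglyMeasurable hki.aestronglyMeasurable
    boundedCausal_heaviside.measurable.aestronglyMeasurable
    (.of_forall fun z => hf.convolutionExistsAt hk hki z) (.of_forall fun z => ?_) ?_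
  · exact convolutionExistsAt_real_comm.1 (hH.convolutionExistsAt hk.norm hki' z)
  · exact hf.norm.convolutionExistsAt (hk.norm.convolution hH.causal) hkH.locallyIntegrable y

lemma hasDerivAt_convolution_convolution_heaviside (hf : BoundedCausal f) (hk : Causal k)
    (hki : LocallyIntegrable k) (y : ℝ) :
    HasDerivAt (f ⋆ (k ⋆ heaviside)) ((f ⋆ k) y) y := by
  rw [← hf.convolution_assoc_heaviside hk hki]
  exact (hf.causal.convolution hk).hasDerivAt_convolution_heaviside
    (hf.continuous_convolution hk hki) y

end BoundedCausal

/-- `K` is a continuous causal function whose derivative on `(0, ∞)` is the nonnegative causal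
function `k`. Here `k` need not be bounded near `0`. -/
structure CausalPrimitive (K k : ℝ → ℝ) : Prop where
  causal : Causal K
  causal_deriv : Causal k
  continuous : Continuous K
  hasDerivAt : ∀ t, 0 < t → HasDerivAt K (k t) t
  deriv_nonneg : ∀ t, 0 ≤ k t

namespace CausalPrimitive

variable {f K k : ℝ → ℝ}

lemma integrableOn_Ioc (h : CausalPrimitive K k) (b : ℝ) : IntegrableOn k (Ioc 0 b) :=
  intervalIntegral.integrableOn_deriv_of_nonneg h.continuous.continuousOn
    (fun t ht => h.hasDerivAt t ht.1) fun t _ => h.deriv_nonneg t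

lemma locallyIntegrable (h : CausalPrimitive K k) : LocallyIntegrable k :=
  h.causal_deriv.locallyIntegrable h.integrableOn_Ioc

lemma convolution_heaviside (h : CausalPrimitive K k) : k ⋆ heaviside = K := by
  funext y
  rcases le_or_gt y 0 with hy | hy
  · rw [h.causal y hy, h.causal_deriv.convolution boundedCausal_heaviside.causal y hy]
  · rw [h.causal_deriv.convolution_heaviside,
      intervalIntegral.integral_eq_sub_of_hasDerivAt_of_le hy.le h.continuous.continuousOn
        (fun t ht => h.hasDerivAt t ht.1)
        ((intervalIntegrable_iff_integrableOn_Ioc_of_le hy.le).2 (h.integrableOn_Ioc y)),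
      h.causal 0 le_rfl, sub_zero]

lemma hasDerivAt_convolution (h : CausalPrimitive K k) (hf : BoundedCausal f) (y : ℝ) :
    HasDerivAt (f ⋆ K) ((f ⋆ k) y) y := by
  rw [← h.convolution_heaviside]
  exact hf.hasDerivAt_convolution_convolution_heaviside h.causal_deriv h.locallyIntegrable y

lemma convolution_le_mul (h : CausalPrimitive K k) (hf : BoundedCausal f) {M : ℝ}
    (hfM : ∀ t, f t ≤ M) (y : ℝ) : (f ⋆ k) y ≤ M * K y := by
  rw [← h.convolution_heaviside, convolution_real_comm k]
  simp only [convolution_lsmul, smul_eq_mul]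
  rw [← integral_const_mul]
  refine integral_mono (hf.convolutionExistsAt h.causal_deriv h.locallyIntegrable y)
    ((boundedCausal_heaviside.convolutionExistsAt h.causal_deriv h.locallyIntegrable
      y).const_mul M) fun s => ?_
  rcases le_or_gt s 0 with hs | hs
  · simp only [hf.causal s hs, boundedCausal_heaviside.causal s hs, zero_mul, mul_zero,
      le_refl]
  · simpa only [heaviside_of_pos hs, one_mul] using
      mul_le_mul_of_nonneg_right (hfM s) (h.deriv_nonneg (y - s))

end CausalPrimitive

/-! ### Equations of state on the half-line -/

lemma contDiff_one_of_hasDerivAt {f f' : ℝ → ℝ} (hf : ∀ x, HasDerivAt f (f' x) x)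
    (hf' : Continuous f') : ContDiff ℝ 1 f :=
  contDiff_one_iff_deriv.2 ⟨fun x => (hf x).differentiableAt, by
    rwa [show deriv f = f' from funext fun x => (hf x).deriv]⟩

lemma strictMonoOn_Ici_of_hasDerivAt {f f' : ℝ → ℝ} {a : ℝ} (hf : ∀ x, HasDerivAt f (f' x) x)
    (hf' : ∀ x, a < x → 0 < f' x) : StrictMonoOn f (Ici a) := by
  refine strictMonoOn_of_deriv_pos (convex_Ici a)
    (fun x _ => (hf x).continuousAt.continuousWithinAt) fun x hx => ?_
  rw [interior_Ici] at hx
  rw [(hf x).deriv]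
  exact hf' x hx

lemma bijOn_Ici_of_strictMonoOn {f : ℝ → ℝ} {a : ℝ} (hc : ContinuousOn f (Ici a))
    (hf : StrictMonoOn f (Ici a)) (hlim : Tendsto f atTop atTop) :
    BijOn f (Ici a) (Ici (f a)) := by
  refine ⟨fun y hy => hf.monotoneOn self_mem_Ici hy hy, hf.injOn, fun z hz => ?_⟩
  obtain ⟨b, hzb, hb⟩ := ((hlim.eventually_ge_atTop z).and (eventually_ge_atTop a)).exists
  obtain ⟨x, hx, rfl⟩ := intermediate_value_Icc hb (hc.mono Icc_subset_Ici_self) ⟨hz, hzb⟩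
  exact ⟨x, hx.1, rfl⟩

section HalfLineInverse

variable {g h g' q : ℝ → ℝ}

/-- The inverse of a bijection `g` of `[0, ∞)`, extended by its value at `0` to negative
arguments. -/
def halfLineInv (g : ℝ → ℝ) (ρ : ℝ) : ℝ := Function.invFunOn g (Ici 0) (max ρ 0)

lemma halfLineInv_nonneg (hg : SurjOn g (Ici 0) (Ici 0)) (ρ : ℝ) : 0 ≤ halfLineInv g ρ :=
  Function.invFunOn_mem (hg (le_max_right ρ 0))

lemma apply_halfLineInv (hg : SurjOn g (Ici 0) (Ici 0)) (ρ : ℝ) :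
    g (halfLineInv g ρ) = max ρ 0 :=
  Function.invFunOn_eq (hg (le_max_right ρ 0))

lemma halfLineInv_apply (hg : BijOn g (Ici 0) (Ici 0)) {y : ℝ} (hy : 0 ≤ y) :
    halfLineInv g (g y) = y := by
  rw [halfLineInv, max_eq_left (hg.mapsTo hy)]
  exact hg.injOn.leftInvOn_invFunOn hy

lemma halfLineInv_of_nonpos (hg : BijOn g (Ici 0) (Ici 0)) (hg₀ : g 0 = 0) {ρ : ℝ} (hρ : ρ ≤ 0) :
    halfLineInv g ρ = 0 := by
  refine hg.injOn (halfLineInv_nonneg hg.surjOn ρ) self_mem_Ici ?_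
  rw [apply_halfLineInv hg.surjOn, max_eq_right hρ, hg₀]

lemma halfLineInv_pos (hg : BijOn g (Ici 0) (Ici 0)) (hg₀ : g 0 = 0) {ρ : ℝ} (hρ : 0 < ρ) :
    0 < halfLineInv g ρ := by
  refine (halfLineInv_nonneg hg.surjOn ρ).lt_of_ne fun h => hρ.ne' ?_
  rw [← max_eq_left hρ.le, ← apply_halfLineInv hg.surjOn, ← h, hg₀]

lemma bijOn_halfLineInv (hg : BijOn g (Ici 0) (Ici 0)) :
    BijOn (halfLineInv g) (Ici 0) (Ici 0) := by
  have hinv : InvOn (halfLineInv g) g (Ici 0) (Ici 0) :=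
    ⟨fun _ hy => halfLineInv_apply hg hy,
      fun ρ hρ => (apply_halfLineInv hg.surjOn ρ).trans (max_eq_left hρ)⟩
  exact hinv.symm.bijOn (fun ρ _ => halfLineInv_nonneg hg.surjOn ρ) hg.mapsTo

lemma monotone_halfLineInv (hmono : StrictMonoOn g (Ici 0)) (hg : SurjOn g (Ici 0) (Ici 0)) :
    Monotone (halfLineInv g) := fun ρ σ hρσ => by
  rw [← hmono.le_iff_le (halfLineInv_nonneg hg ρ) (halfLineInv_nonneg hg σ),
    apply_halfLineInv hg, apply_halfLineInv hg]
  exact max_le_max_right 0 hρσ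

lemma continuous_halfLineInv (hmono : StrictMonoOn g (Ici 0)) (hg : BijOn g (Ici 0) (Ici 0)) :
    Continuous (halfLineInv g) := by
  have hmono' : Monotone (codRestrict (halfLineInv g) (Ici 0) (halfLineInv_nonneg hg.surjOn)) :=
    fun _ _ hρσ => monotone_halfLineInv hmono hg.surjOn hρσ
  exact continuous_subtype_val.comp <| hmono'.continuous_of_surjective fun y =>
    ⟨g y, Subtype.ext (halfLineInv_apply hg y.2)⟩

/-- The relation `P` with `P (g y) = h y` for `y ≥ 0`, extended by the constant `h 0` to negative
arguments. -/
def equationOfState (g h : ℝ → ℝ) : ℝ → ℝ := h ∘ halfLineInv g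

lemma equationOfState_apply (hg : BijOn g (Ici 0) (Ici 0)) {y : ℝ} (hy : 0 ≤ y) :
    equationOfState g h (g y) = h y := congrArg h (halfLineInv_apply hg hy)

lemma bijOn_equationOfState (hg : BijOn g (Ici 0) (Ici 0)) (hh : BijOn h (Ici 0) (Ici 0)) :
    BijOn (equationOfState g h) (Ici 0) (Ici 0) := hh.comp (bijOn_halfLineInv hg)

lemma hasDerivAt_equationOfState (hmono : StrictMonoOn g (Ici 0)) (hg : BijOn g (Ici 0) (Ici 0))
    (hg₀ : g 0 = 0) (hgd : ∀ y, 0 < y → HasDerivAt g (g' y) y) (hg' : ∀ y, 0 < y → g' y ≠ 0)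
    (hhc : Continuous h) (hhd : ∀ y, 0 < y → HasDerivAt h (q y * g' y) y) (hq : Continuous q)
    (hq₀ : q 0 = 0) (ρ : ℝ) : HasDerivAt (equationOfState g h) (q (halfLineInv g ρ)) ρ := by
  have hinv := continuous_halfLineInv hmono hg
  have hneg : ∀ ρ < 0, HasDerivAt (equationOfState g h) (q (halfLineInv g ρ)) ρ := fun ρ hρ => by
    rw [halfLineInv_of_nonpos hg hg₀ hρ.le, hq₀]
    refine (hasDerivAt_const ρ (h 0)).congr_of_eventuallyEq ?_
    filter_upwards [eventually_lt_nhds hρ] with σ hσ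
    rw [equationOfState, Function.comp_apply, halfLineInv_of_nonpos hg hg₀ hσ.le]
  have hpos : ∀ ρ > 0, HasDerivAt (equationOfState g h) (q (halfLineInv g ρ)) ρ := fun ρ hρ => by
    have hy := halfLineInv_pos hg hg₀ hρ
    have hinvd : HasDerivAt (halfLineInv g) (g' (halfLineInv g ρ))⁻¹ ρ := by
      refine (hgd _ hy).of_local_left_inverse hinv.continuousAt (hg' _ hy) ?_
      filter_upwards [eventually_gt_nhds hρ] with σ hσ
      rw [apply_halfLineInv hg.surjOn, max_eq_left hσ.le]
    exact ((hhd _ hy).comp ρ hinvd).congr_deriv (mul_inv_cancel_right₀ (hg' _ hy) _)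
  exact hasDerivAt_of_hasDerivAt_of_ne' (x := 0)
    (fun σ hσ => (lt_or_gt_of_ne hσ).elim (hneg σ) (hpos σ))
    (hhc.comp hinv).continuousAt (hq.comp hinv).continuousAt ρ

end HalfLineInverse

/-- The properties of the energy density `g` and the pressure `h` on which the study of the equation
of state rests; `τ` is the growth rate of the trace `g - 3h`. -/
structure MacroscopicSystem (g h τ : ℝ → ℝ) : Prop where
  causal_energy : Causal g
  causal_pressure : Causal h
  hasDerivAt_pressure : ∀ y, HasDerivAt h (g y + h y) y
  hasDerivAt_trace : ∀ y, HasDerivAt (fun y => g y - 3 * h y) (τ y) y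
  continuous_rate : Continuous τ
  rate_pos : ∀ y, 0 < y → 0 < τ y
  rate_le : ∃ A, ∀ y, 0 ≤ y → τ y ≤ A * Real.exp (2 * y)
  tendsto_div_rate : Tendsto (fun y => (g y + h y) / τ y) (𝓝[>] 0) (𝓝 0)

namespace MacroscopicSystem

variable {g h τ : ℝ → ℝ}

lemma hasDerivAt_energy (S : MacroscopicSystem g h τ) (y : ℝ) :
    HasDerivAt g (3 * (g y + h y) + τ y) y := by
  refine (((S.hasDerivAt_pressure y).const_mul 3).add (S.hasDerivAt_trace y)).congr_of_eventuallyEq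
    (.of_forall fun z => ?_)
  simp only [Pi.add_apply, add_sub_cancel]

lemma continuous_pressure (S : MacroscopicSystem g h τ) : Continuous h :=
  continuous_iff_continuousAt.2 fun y => (S.hasDerivAt_pressure y).continuousAt

lemma continuous_energy (S : MacroscopicSystem g h τ) : Continuous g :=
  continuous_iff_continuousAt.2 fun y => (S.hasDerivAt_energy y).continuousAt

lemma contDiff_pressure (S : MacroscopicSystem g h τ) : ContDiff ℝ 1 h :=
  contDiff_one_of_hasDerivAt S.hasDerivAt_pressure (S.continuous_energy.add S.continuous_pressure)

lemma contDiff_energy (S : MacroscopicSystem g h τ) : ContDiff ℝ 1 g :=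
  contDiff_one_of_hasDerivAt S.hasDerivAt_energy
    (((S.continuous_energy.add S.continuous_pressure).const_mul 3).add S.continuous_rate)

lemma trace_zero (S : MacroscopicSystem g h τ) : g 0 - 3 * h 0 = 0 := by
  rw [S.causal_energy 0 le_rfl, S.causal_pressure 0 le_rfl, mul_zero, sub_zero]

lemma strictMonoOn_trace (S : MacroscopicSystem g h τ) :
    StrictMonoOn (fun y => g y - 3 * h y) (Ici 0) :=
  strictMonoOn_Ici_of_hasDerivAt S.hasDerivAt_trace S.rate_pos

lemma trace_pos (S : MacroscopicSystem g h τ) {y : ℝ} (hy : 0 < y) : 0 < g y - 3 * h y :=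
  S.trace_zero.symm.trans_lt (S.strictMonoOn_trace self_mem_Ici hy.le hy)

lemma trace_nonneg (S : MacroscopicSystem g h τ) {y : ℝ} (hy : 0 ≤ y) : 0 ≤ g y - 3 * h y :=
  S.trace_zero.symm.trans_le (S.strictMonoOn_trace.monotoneOn self_mem_Ici hy hy)

lemma strictMonoOn_exp_mul_pressure (S : MacroscopicSystem g h τ) :
    StrictMonoOn (fun y => Real.exp (-4 * y) * h y) (Ici 0) := by
  refine strictMonoOn_Ici_of_hasDerivAt (f' := fun y => Real.exp (-4 * y) * (g y - 3 * h y))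
    (fun y => ?_) fun y hy => mul_pos (Real.exp_pos _) (S.trace_pos hy)
  refine ((((hasDerivAt_id y).const_mul (-4)).exp).mul (S.hasDerivAt_pressure y)).congr_deriv ?_
  simp only [id, mul_one]
  ring

lemma pressure_pos (S : MacroscopicSystem g h τ) {y : ℝ} (hy : 0 < y) : 0 < h y := by
  have hlt := S.strictMonoOn_exp_mul_pressure self_mem_Ici hy.le hy
  simp only [S.causal_pressure 0 le_rfl, mul_zero] at hlt
  exact (pos_iff_pos_of_mul_pos hlt).1 (Real.exp_pos _)

lemma exp_four_mul_le (S : MacroscopicSystem g h τ) {y : ℝ} (hy : 1 ≤ y) :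
    Real.exp (4 * y) ≤ Real.exp 4 / h 1 * h y := by
  have hle := S.strictMonoOn_exp_mul_pressure.monotoneOn
    (mem_Ici.2 zero_le_one) (mem_Ici.2 (zero_le_one.trans hy)) hy
  simp only [neg_mul, Real.exp_neg, mul_one] at hle
  rw [inv_mul_le_iff₀ (Real.exp_pos 4)] at hle
  rw [div_mul_eq_mul_div, le_div_iff₀ (S.pressure_pos one_pos)]
  calc Real.exp (4 * y) * h 1
      ≤ Real.exp (4 * y) * (Real.exp 4 * ((Real.exp (4 * y))⁻¹ * h y)) := by gcongr
    _ = Real.exp 4 * h y := by field_simp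

lemma energy_pos (S : MacroscopicSystem g h τ) {y : ℝ} (hy : 0 < y) : 0 < g y := by
  linarith [S.pressure_pos hy, S.trace_pos hy]

lemma strictMonoOn_pressure (S : MacroscopicSystem g h τ) : StrictMonoOn h (Ici 0) :=
  strictMonoOn_Ici_of_hasDerivAt S.hasDerivAt_pressure fun _ hy =>
    add_pos (S.energy_pos hy) (S.pressure_pos hy)

lemma energy_deriv_pos (S : MacroscopicSystem g h τ) {y : ℝ} (hy : 0 < y) :
    0 < 3 * (g y + h y) + τ y := by
  linarith [S.energy_pos hy, S.pressure_pos hy, S.rate_pos y hy]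

lemma strictMonoOn_energy (S : MacroscopicSystem g h τ) : StrictMonoOn g (Ici 0) :=
  strictMonoOn_Ici_of_hasDerivAt S.hasDerivAt_energy fun _ hy => S.energy_deriv_pos hy

lemma pressure_nonneg (S : MacroscopicSystem g h τ) {y : ℝ} (hy : 0 ≤ y) : 0 ≤ h y :=
  (S.causal_pressure 0 le_rfl).symm.trans_le (S.strictMonoOn_pressure.monotoneOn self_mem_Ici hy hy)

lemma tendsto_pressure (S : MacroscopicSystem g h τ) : Tendsto h atTop atTop := by
  have hexp : Tendsto (fun y => Real.exp (4 * y)) atTop atTop :=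
    Real.tendsto_exp_atTop.comp (tendsto_id.const_mul_atTop four_pos)
  refine (tendsto_const_mul_atTop_of_pos (div_pos (Real.exp_pos 4) (S.pressure_pos one_pos))).1 ?_
  exact tendsto_atTop_mono' atTop
    ((eventually_ge_atTop 1).mono fun _ hy => S.exp_four_mul_le hy) hexp

lemma tendsto_energy (S : MacroscopicSystem g h τ) : Tendsto g atTop atTop := by
  refine tendsto_atTop_mono' atTop ?_ (S.tendsto_pressure.const_mul_atTop three_pos)
  filter_upwards [eventually_ge_atTop 0] with y hy
  linarith [S.trace_nonneg hy]

lemma bijOn_pressure (S : MacroscopicSystem g h τ) : BijOn h (Ici 0) (Ici 0) := by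
  simpa only [S.causal_pressure 0 le_rfl] using bijOn_Ici_of_strictMonoOn
    S.continuous_pressure.continuousOn S.strictMonoOn_pressure S.tendsto_pressure

lemma bijOn_energy (S : MacroscopicSystem g h τ) : BijOn g (Ici 0) (Ici 0) := by
  simpa only [S.causal_energy 0 le_rfl] using bijOn_Ici_of_strictMonoOn
    S.continuous_energy.continuousOn S.strictMonoOn_energy S.tendsto_energy

lemma exists_trace_le_exp (S : MacroscopicSystem g h τ) :
    ∃ B, ∀ y, 0 ≤ y → g y - 3 * h y ≤ B * Real.exp (2 * y) := by
  obtain ⟨A, hA⟩ := S.rate_le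
  have hA₀ : 0 ≤ A := by
    have := (S.rate_pos 1 one_pos).le.trans (hA 1 zero_le_one)
    exact nonneg_of_mul_nonneg_left this (Real.exp_pos _)
  have hexp : ∀ x, HasDerivAt (fun y => A / 2 * Real.exp (2 * y)) (A * Real.exp (2 * x)) x :=
    fun x => by
      refine ((((hasDerivAt_id x).const_mul 2).exp).const_mul (A / 2)).congr_deriv ?_
      simp only [id, mul_one]
      ring
  refine ⟨A / 2, fun y hy => ?_⟩
  refine image_le_of_deriv_right_le_deriv_boundary (a := 0) (b := y)
    (fun x _ => (S.hasDerivAt_trace x).continuousAt.continuousWithinAt)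
    (fun x _ => (S.hasDerivAt_trace x).hasDerivWithinAt) (S.trace_zero.trans_le (by positivity))
    (fun x _ => (hexp x).continuousAt.continuousWithinAt)
    (fun x _ => (hexp x).hasDerivWithinAt) (fun x hx => hA x hx.1) ⟨hy, le_rfl⟩

lemma exists_trace_sq_le_of_le_one (S : MacroscopicSystem g h τ) :
    ∃ C, ∀ y ∈ Icc (0 : ℝ) 1, (g y - 3 * h y) ^ 2 ≤ C * h y := by
  obtain ⟨A, hA⟩ := isCompact_Icc.bddAbove_image (K := Icc (0 : ℝ) 1) S.continuous_rate.continuousOn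
  have hτ : ∀ x ∈ Icc (0 : ℝ) 1, τ x ≤ A := fun x hx => hA (mem_image_of_mem τ hx)
  have hsq : ∀ x, HasDerivAt (fun y => (g y - 3 * h y) ^ 2) (2 * (g x - 3 * h x) * τ x) x :=
    fun x => ((S.hasDerivAt_trace x).pow 2).congr_deriv (by simp)
  have hAh : ∀ x, HasDerivAt (fun y => 2 * A * h y) (2 * A * (g x + h x)) x :=
    fun x => (S.hasDerivAt_pressure x).const_mul (2 * A)
  refine ⟨2 * A, fun y hy => ?_⟩
  refine image_le_of_deriv_right_le_deriv_boundary (a := 0) (b := 1)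
    (fun x _ => (hsq x).continuousAt.continuousWithinAt) (fun x _ => (hsq x).hasDerivWithinAt) ?_
    (fun x _ => (hAh x).continuousAt.continuousWithinAt) (fun x _ => (hAh x).hasDerivWithinAt)
    (fun x hx => ?_) hy
  · rw [S.trace_zero, S.causal_pressure 0 le_rfl, mul_zero, zero_pow two_ne_zero]
  · have htr := S.trace_nonneg hx.1
    have hA₀ : 0 ≤ A := (S.rate_pos 1 one_pos).le.trans (hτ 1 ⟨zero_le_one, le_rfl⟩)
    calc 2 * (g x - 3 * h x) * τ x ≤ 2 * (g x - 3 * h x) * A := by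
          gcongr
          exact hτ x ⟨hx.1, hx.2.le⟩
      _ = 2 * A * (g x - 3 * h x) := by ring
      _ ≤ 2 * A * (g x + h x) := by
          gcongr
          linarith [S.pressure_nonneg hx.1]

lemma exists_trace_sq_le_of_one_le (S : MacroscopicSystem g h τ) :
    ∃ C, ∀ y, 1 ≤ y → (g y - 3 * h y) ^ 2 ≤ C * h y := by
  obtain ⟨B, hB⟩ := S.exists_trace_le_exp
  refine ⟨B ^ 2 * (Real.exp 4 / h 1), fun y hy => ?_⟩
  have hy₀ : 0 ≤ y := zero_le_one.trans hy
  calc (g y - 3 * h y) ^ 2 ≤ (B * Real.exp (2 * y)) ^ 2 :=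
        pow_le_pow_left₀ (S.trace_nonneg hy₀) (hB y hy₀) 2
    _ = B ^ 2 * Real.exp (4 * y) := by
        rw [mul_pow, ← Real.exp_nat_mul]
        ring_nf
    _ ≤ B ^ 2 * (Real.exp 4 / h 1 * h y) :=
        mul_le_mul_of_nonneg_left (S.exp_four_mul_le hy) (sq_nonneg B)
    _ = B ^ 2 * (Real.exp 4 / h 1) * h y := (mul_assoc _ _ _).symm

lemma exists_trace_le_sqrt_pressure (S : MacroscopicSystem g h τ) :
    ∃ C, 0 < C ∧ ∀ y, 0 ≤ y → g y - 3 * h y ≤ C * √(h y) := by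
  obtain ⟨C₀, hC₀⟩ := S.exists_trace_sq_le_of_le_one
  obtain ⟨C₁, hC₁⟩ := S.exists_trace_sq_le_of_one_le
  have hC : 0 < max 1 (max C₀ C₁) := one_pos.trans_le (le_max_left _ _)
  refine ⟨√(max 1 (max C₀ C₁)), Real.sqrt_pos.2 hC, fun y hy => ?_⟩
  rw [← Real.sqrt_mul hC.le]
  refine Real.le_sqrt_of_sq_le ?_
  have hh := S.pressure_nonneg hy
  rcases le_total y 1 with hy₁ | hy₁
  · exact (hC₀ y ⟨hy, hy₁⟩).trans (by gcongr; exact (le_max_left _ _).trans (le_max_right _ _))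
  · exact (hC₁ y hy₁).trans (by gcongr; exact (le_max_right _ _).trans (le_max_right _ _))

/-- The derivative `h' / g'` of the equation of state, as a function of `y` instead of `ρ = g y`. -/
def slope (g h τ : ℝ → ℝ) (y : ℝ) : ℝ := (g y + h y) / (3 * (g y + h y) + τ y)

lemma slope_of_nonpos (S : MacroscopicSystem g h τ) {y : ℝ} (hy : y ≤ 0) : slope g h τ y = 0 := by
  rw [slope, S.causal_energy y hy, S.causal_pressure y hy, add_zero, zero_div]

lemma slope_pos (S : MacroscopicSystem g h τ) {y : ℝ} (hy : 0 < y) : 0 < slope g h τ y :=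
  div_pos (add_pos (S.energy_pos hy) (S.pressure_pos hy)) (S.energy_deriv_pos hy)

lemma slope_lt_one_third (S : MacroscopicSystem g h τ) {y : ℝ} (hy : 0 < y) :
    slope g h τ y < 1 / 3 := by
  rw [slope, div_lt_div_iff₀ (S.energy_deriv_pos hy) three_pos]
  linarith [S.rate_pos y hy]

lemma slope_le_div_rate (S : MacroscopicSystem g h τ) {y : ℝ} (hy : 0 < y) :
    slope g h τ y ≤ (g y + h y) / τ y := by
  have := add_pos (S.energy_pos hy) (S.pressure_pos hy)
  exact div_le_div_of_nonneg_left this.le (S.rate_pos y hy) (by linarith)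

lemma continuous_slope (S : MacroscopicSystem g h τ) : Continuous (slope g h τ) := by
  have hgh := S.continuous_energy.add S.continuous_pressure
  refine continuous_iff_continuousAt.2 fun y => ?_
  rcases lt_trichotomy y 0 with hy | rfl | hy
  · exact continuousAt_const.congr <| (eventually_lt_nhds hy).mono fun z hz =>
      (S.slope_of_nonpos hz.le).symm
  · refine continuousAt_iff_continuous_left'_right'.2 ⟨?_, ?_⟩
    · exact continuousWithinAt_const.congr (fun z hz => S.slope_of_nonpos (mem_Iio.1 hz).le)
        (S.slope_of_nonpos le_rfl)
    · rw [ContinuousWithinAt, S.slope_of_nonpos le_rfl]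
      refine tendsto_of_tendsto_of_tendsto_of_le_of_le' tendsto_const_nhds S.tendsto_div_rate ?_ ?_
      exacts [eventually_mem_nhdsWithin.mono fun z hz => (S.slope_pos hz).le,
        eventually_mem_nhdsWithin.mono fun z hz => S.slope_le_div_rate hz]
  · exact hgh.continuousAt.div ((hgh.const_mul 3).add S.continuous_rate).continuousAt
      (S.energy_deriv_pos hy).ne'

lemma hasDerivAt_equationOfState (S : MacroscopicSystem g h τ) (ρ : ℝ) :
    HasDerivAt (equationOfState g h) (slope g h τ (halfLineInv g ρ)) ρ :=
  _root_.hasDerivAt_equationOfState S.strictMonoOn_energy S.bijOn_energy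
    (S.causal_energy 0 le_rfl) (fun y _ => S.hasDerivAt_energy y)
    (fun _ hy => (S.energy_deriv_pos hy).ne') S.continuous_pressure
    (fun y hy => (S.hasDerivAt_pressure y).congr_deriv
      (div_mul_cancel₀ _ (S.energy_deriv_pos hy).ne').symm)
    S.continuous_slope (S.slope_of_nonpos le_rfl) ρ

lemma contDiff_equationOfState (S : MacroscopicSystem g h τ) :
    ContDiff ℝ 1 (equationOfState g h) :=
  contDiff_one_of_hasDerivAt S.hasDerivAt_equationOfState
    (S.continuous_slope.comp (continuous_halfLineInv S.strictMonoOn_energy S.bijOn_energy))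

lemma equationOfState_zero (S : MacroscopicSystem g h τ) : equationOfState g h 0 = 0 := by
  have h₀ := equationOfState_apply (h := h) S.bijOn_energy le_rfl
  rwa [S.causal_energy 0 le_rfl, S.causal_pressure 0 le_rfl] at h₀

lemma deriv_equationOfState_mem_Ioo (S : MacroscopicSystem g h τ) {ρ : ℝ} (hρ : 0 < ρ) :
    deriv (equationOfState g h) ρ ∈ Ioo 0 (1 / 3) := by
  have hy := halfLineInv_pos S.bijOn_energy (S.causal_energy 0 le_rfl) hρ
  rw [(S.hasDerivAt_equationOfState ρ).deriv]
  exact ⟨S.slope_pos hy, S.slope_lt_one_third hy⟩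

lemma exists_abs_sub_three_mul_equationOfState_le (S : MacroscopicSystem g h τ) :
    ∃ C, 0 < C ∧ ∀ ρ, 0 ≤ ρ →
      |ρ - 3 * equationOfState g h ρ| ≤ C * √(equationOfState g h ρ) := by
  obtain ⟨C, hC, hle⟩ := S.exists_trace_le_sqrt_pressure
  refine ⟨C, hC, fun ρ hρ => ?_⟩
  obtain ⟨y, hy, rfl⟩ := S.bijOn_energy.surjOn hρ
  rw [equationOfState_apply S.bijOn_energy hy, abs_of_nonneg (S.trace_nonneg hy)]
  exact hle y hy

lemma equationOfState_le (S : MacroscopicSystem g h τ) {ρ : ℝ} (hρ : 0 ≤ ρ) :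
    equationOfState g h ρ ≤ ρ := by
  obtain ⟨y, hy, rfl⟩ := S.bijOn_energy.surjOn hρ
  rw [equationOfState_apply S.bijOn_energy hy]
  linarith [S.trace_nonneg hy, S.pressure_nonneg hy]

lemma abs_equationOfState_sub_third_le (S : MacroscopicSystem g h τ) {C : ℝ} (hC : 0 ≤ C)
    {ρ : ℝ} (hρ : 0 ≤ ρ)
    (hle : |ρ - 3 * equationOfState g h ρ| ≤ C * √(equationOfState g h ρ)) :
    |equationOfState g h ρ - ρ / 3| ≤ C * √ρ :=
  calc |equationOfState g h ρ - ρ / 3| = |ρ - 3 * equationOfState g h ρ| / 3 := by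
        rw [abs_sub_comm, show ρ / 3 - equationOfState g h ρ = (ρ - 3 * equationOfState g h ρ) / 3
          by ring, abs_div, abs_of_pos (three_pos (α := ℝ))]
    _ ≤ |ρ - 3 * equationOfState g h ρ| := div_le_self (abs_nonneg _) (by norm_num)
    _ ≤ C * √(equationOfState g h ρ) := hle
    _ ≤ C * √ρ := by
        gcongr
        exact S.equationOfState_le hρ

end MacroscopicSystem

/-! ### The kernels of an ansatz -/

/-- The profile `s ↦ Φ (1 - e⁻ˢ)` on `(0, ∞)`: the ansatz `Φ` in the logarithmic variable in which
`gfun Φ` and `hfun Φ` are convolutions. -/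
def logProfile (Φ : ℝ → ℝ) : ℝ → ℝ := (Ioi 0).indicator fun s => Φ (1 - Real.exp (-s))

/-- The momentum `√(E² - 1)` of a particle of unit mass with energy `E = eᵗ`, from which all kernels
are built. It is causal because `√x = 0` for `x ≤ 0`. -/
def momentum (t : ℝ) : ℝ := √(Real.exp (2 * t) - 1)

/-- The kernel of the energy density: `gfun Φ = logProfile Φ ⋆ energyKernel`. -/
def energyKernel (t : ℝ) : ℝ := 4 * Real.pi * Real.exp (3 * t) * momentum t

/-- The kernel of the pressure: `hfun Φ = logProfile Φ ⋆ pressureKernel`. -/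
def pressureKernel (t : ℝ) : ℝ := 4 * Real.pi / 3 * Real.exp t * momentum t ^ 3

/-- The kernel of the trace `g - 3h` of the energy-momentum tensor. -/
def traceKernel (t : ℝ) : ℝ := 4 * Real.pi * Real.exp t * momentum t

/-- The derivative of `traceKernel`, singular at `0` from the right; it vanishes for `t ≤ 0` because
of `0⁻¹ = 0`. -/
def traceRateKernel (t : ℝ) : ℝ :=
  4 * Real.pi * (Real.exp t * momentum t + Real.exp (3 * t) * (momentum t)⁻¹)

section Kernels

lemma causal_momentum : Causal momentum := fun t ht =>
  Real.sqrt_eq_zero_of_nonpos (sub_nonpos.2 (Real.exp_le_one_iff.2 (by linarith)))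

lemma momentum_pos {t : ℝ} (ht : 0 < t) : 0 < momentum t :=
  Real.sqrt_pos.2 (sub_pos.2 (Real.one_lt_exp_iff.2 (by linarith)))

lemma momentum_nonneg (t : ℝ) : 0 ≤ momentum t := Real.sqrt_nonneg _

lemma momentum_sq {t : ℝ} (ht : 0 ≤ t) : momentum t ^ 2 = Real.exp (2 * t) - 1 :=
  Real.sq_sqrt (sub_nonneg.2 (Real.one_le_exp_iff.2 (by linarith)))

lemma momentum_le_exp (t : ℝ) : momentum t ≤ Real.exp t := by
  refine Real.sqrt_le_iff.2 ⟨(Real.exp_pos t).le, ?_⟩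
  rw [← Real.exp_nat_mul, Nat.cast_ofNat]
  linarith

lemma continuous_momentum : Continuous momentum := by
  unfold momentum
  fun_prop

lemma hasDerivAt_momentum {t : ℝ} (ht : 0 < t) :
    HasDerivAt momentum (Real.exp (2 * t) * (momentum t)⁻¹) t := by
  have hexp : HasDerivAt (fun t => Real.exp (2 * t) - 1) (Real.exp (2 * t) * 2) t := by
    simpa only [id, mul_one] using (((hasDerivAt_id t).const_mul 2).exp).sub_const 1
  refine (hexp.sqrt (Real.sqrt_pos.1 (momentum_pos ht)).ne').congr_deriv ?_
  change _ / (2 * momentum t) = _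
  have := (momentum_pos ht).ne'
  field_simp

lemma momentum_mul_exp (s y : ℝ) :
    √(Real.exp (-s) ^ 2 - Real.exp (-2 * y)) = Real.exp (-y) * momentum (y - s) := by
  have hfactor : Real.exp (-s) ^ 2 - Real.exp (-2 * y) =
      Real.exp (-y) ^ 2 * (Real.exp (2 * (y - s)) - 1) := by
    simp only [mul_sub, mul_one, ← Real.exp_nat_mul, ← Real.exp_add]
    ring_nf
  rw [hfactor, Real.sqrt_mul (by positivity), Real.sqrt_sq (Real.exp_pos _).le, momentum]

lemma causal_energyKernel : Causal energyKernel := fun t ht => by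
  rw [energyKernel, causal_momentum t ht, mul_zero]

lemma causal_pressureKernel : Causal pressureKernel := fun t ht => by
  rw [pressureKernel, causal_momentum t ht, zero_pow three_ne_zero, mul_zero]

lemma causal_traceKernel : Causal traceKernel := fun t ht => by
  rw [traceKernel, causal_momentum t ht, mul_zero]

lemma causal_traceRateKernel : Causal traceRateKernel := fun t ht => by
  simp only [traceRateKernel, causal_momentum t ht, mul_zero, inv_zero, add_zero]

lemma continuous_energyKernel : Continuous energyKernel := by
  unfold energyKernel
  have := continuous_momentum
  fun_prop

lemma continuous_pressureKernel : Continuous pressureKernel := by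
  unfold pressureKernel
  have := continuous_momentum
  fun_prop

lemma continuous_traceKernel : Continuous traceKernel := by
  unfold traceKernel
  have := continuous_momentum
  fun_prop

lemma energyKernel_nonneg (t : ℝ) : 0 ≤ energyKernel t := by
  have := momentum_nonneg t
  unfold energyKernel
  positivity

lemma pressureKernel_nonneg (t : ℝ) : 0 ≤ pressureKernel t := by
  have := momentum_nonneg t
  unfold pressureKernel
  positivity

lemma traceRateKernel_pos {t : ℝ} (ht : 0 < t) : 0 < traceRateKernel t := by
  have := momentum_pos ht
  unfold traceRateKernel
  positivity

lemma exp_three_mul (t : ℝ) : Real.exp (3 * t) = Real.exp (2 * t) * Real.exp t := by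
  rw [← Real.exp_add]
  ring_nf

lemma energyKernel_eq : energyKernel = (3 : ℝ) • pressureKernel + traceKernel := by
  funext t
  rcases le_or_gt t 0 with ht | ht
  · simp only [Pi.add_apply, Pi.smul_apply, causal_energyKernel t ht, causal_pressureKernel t ht,
      causal_traceKernel t ht, smul_zero, add_zero]
  · simp only [Pi.add_apply, Pi.smul_apply, energyKernel, pressureKernel, traceKernel,
      smul_eq_mul, exp_three_mul]
    linear_combination -4 * Real.pi * Real.exp t * momentum t * momentum_sq ht.le

lemma causalPrimitive_pressureKernel :
    CausalPrimitive pressureKernel (energyKernel + pressureKernel) where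
  causal := causal_pressureKernel
  causal_deriv := causal_energyKernel.add causal_pressureKernel
  continuous := continuous_pressureKernel
  deriv_nonneg t := add_nonneg (energyKernel_nonneg t) (pressureKernel_nonneg t)
  hasDerivAt t ht := by
    refine (((Real.hasDerivAt_exp t).const_mul (4 * Real.pi / 3)).mul
      ((hasDerivAt_momentum ht).pow 3)).congr_deriv ?_
    have := (momentum_pos ht).ne'
    simp only [Pi.add_apply, Pi.pow_apply, energyKernel, pressureKernel, exp_three_mul]
    field_simp
    ring

lemma causalPrimitive_traceKernel : CausalPrimitive traceKernel traceRateKernel where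
  causal := causal_traceKernel
  causal_deriv := causal_traceRateKernel
  continuous := continuous_traceKernel
  deriv_nonneg t := (le_or_gt t 0).elim (fun ht => (causal_traceRateKernel t ht).ge)
    fun ht => (traceRateKernel_pos ht).le
  hasDerivAt t ht := by
    refine (((Real.hasDerivAt_exp t).const_mul (4 * Real.pi)).mul
      (hasDerivAt_momentum ht)).congr_deriv ?_
    simp only [traceRateKernel, exp_three_mul]
    ring

lemma traceKernel_le (t : ℝ) : traceKernel t ≤ 4 * Real.pi * Real.exp (2 * t) := by
  rw [traceKernel, mul_assoc, two_mul, Real.exp_add]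
  gcongr
  exact momentum_le_exp t

lemma energyKernel_add_pressureKernel_le (t : ℝ) : energyKernel t + pressureKernel t ≤
    4 / 3 * (Real.exp (2 * t) - 1) * traceRateKernel t := by
  rcases le_or_gt t 0 with ht | ht
  · rw [causal_energyKernel t ht, causal_pressureKernel t ht, causal_traceRateKernel t ht, add_zero,
      mul_zero]
  have hm := momentum_pos ht
  have hrate : (Real.exp (2 * t) - 1) * traceRateKernel t =
      energyKernel t + 3 * pressureKernel t := by
    rw [← momentum_sq ht.le, energyKernel, pressureKernel, traceRateKernel]
    field_simp
    ring
  have hEP : 3 * pressureKernel t ≤ energyKernel t := by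
    rw [energyKernel_eq]
    simp only [Pi.add_apply, Pi.smul_apply, smul_eq_mul, traceKernel]
    exact le_add_of_nonneg_right (by positivity)
  nlinarith [pressureKernel_nonneg t]

end Kernels

lemma integral_comp_one_sub_exp_neg (F : ℝ → ℝ) (y : ℝ) :
    ∫ s in (0 : ℝ)..y, F (1 - Real.exp (-s)) * Real.exp (-s) =
      ∫ η in (0 : ℝ)..(1 - Real.exp (-y)), F η := by
  have h := intervalIntegral.integral_comp_mul_deriv_of_deriv_nonneg (g := F) (a := 0) (b := y)
    (f := fun s => 1 - Real.exp (-s)) (f' := fun s => Real.exp (-s)) (by fun_prop)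
    (fun s _ => by simpa using (hasDerivAt_neg s).exp.const_sub 1)
    (fun s _ => (Real.exp_pos _).le)
  simpa using h

lemma causal_logProfile (Φ : ℝ → ℝ) : Causal (logProfile Φ) := fun _ ht =>
  indicator_of_notMem (notMem_Ioi.2 ht) _

lemma logProfile_of_pos (Φ : ℝ → ℝ) {s : ℝ} (hs : 0 < s) :
    logProfile Φ s = Φ (1 - Real.exp (-s)) := indicator_of_mem hs _

lemma logProfile_convolution_eq {Φ k : ℝ → ℝ} (hk : Causal k) {y : ℝ} (hy : 0 ≤ y) :
    (logProfile Φ ⋆ k) y = ∫ s in (0 : ℝ)..y, Φ (1 - Real.exp (-s)) * k (y - s) := by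
  rw [(causal_logProfile Φ).convolution_eq_intervalIntegral hk hy,
    intervalIntegral.integral_of_le hy, intervalIntegral.integral_of_le hy]
  refine setIntegral_congr_fun measurableSet_Ioc fun s hs => ?_
  simp only [logProfile_of_pos Φ hs.1]

lemma gfun_eq_convolution (Φ : ℝ → ℝ) : gfun Φ = logProfile Φ ⋆ energyKernel := by
  funext y
  rcases le_or_gt y 0 with hy | hy
  · rw [gfun, if_pos hy, (causal_logProfile Φ).convolution causal_energyKernel y hy]
  rw [gfun, if_neg hy.not_ge, logProfile_convolution_eq causal_energyKernel hy.le,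
    ← integral_comp_one_sub_exp_neg, ← intervalIntegral.integral_const_mul]
  refine intervalIntegral.integral_congr fun s _ => ?_
  have hexp : Real.exp (4 * y) * Real.exp (-s) ^ 2 * Real.exp (-y) * Real.exp (-s) =
      Real.exp (3 * (y - s)) := by
    simp only [← Real.exp_nat_mul, ← Real.exp_add]
    ring_nf
  simp only [sub_sub_cancel, momentum_mul_exp, energyKernel]
  linear_combination 4 * Real.pi * Φ (1 - Real.exp (-s)) * momentum (y - s) * hexp

lemma hfun_eq_convolution (Φ : ℝ → ℝ) : hfun Φ = logProfile Φ ⋆ pressureKernel := by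
  funext y
  rcases le_or_gt y 0 with hy | hy
  · rw [hfun, if_pos hy, (causal_logProfile Φ).convolution causal_pressureKernel y hy]
  rw [hfun, if_neg hy.not_ge, logProfile_convolution_eq causal_pressureKernel hy.le,
    ← integral_comp_one_sub_exp_neg, ← intervalIntegral.integral_const_mul]
  refine intervalIntegral.integral_congr fun s _ => ?_
  have hexp : Real.exp (4 * y) * Real.exp (-y) ^ 3 * Real.exp (-s) = Real.exp (y - s) := by
    simp only [← Real.exp_nat_mul, ← Real.exp_add]
    ring_nf
  simp only [sub_sub_cancel, momentum_mul_exp, pressureKernel]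
  linear_combination 4 * Real.pi / 3 * Φ (1 - Real.exp (-s)) * momentum (y - s) ^ 3 * hexp

lemma one_sub_exp_neg_mem_Ioo {s : ℝ} (hs : 0 < s) : 1 - Real.exp (-s) ∈ Ioo (0 : ℝ) 1 :=
  ⟨sub_pos.2 (Real.exp_lt_one_iff.2 (neg_neg_of_pos hs)), sub_lt_self 1 (Real.exp_pos _)⟩

lemma logProfile_mem {Φ : ℝ → ℝ} {S : Set ℝ} (h₀ : (0 : ℝ) ∈ S) (hΦ : MapsTo Φ (Ioo 0 1) S)
    (s : ℝ) : logProfile Φ s ∈ S := by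
  rcases le_or_gt s 0 with hs | hs
  · rwa [causal_logProfile Φ s hs]
  · rw [logProfile_of_pos Φ hs]
    exact hΦ (one_sub_exp_neg_mem_Ioo hs)

lemma eventually_logProfile_pos {Φ : ℝ → ℝ} (hΦ : ∀ᶠ η in 𝓝[>] 0, 0 < Φ η) :
    ∀ᶠ s in 𝓝[>] 0, 0 < logProfile Φ s := by
  have hlim : Tendsto (fun s => 1 - Real.exp (-s)) (𝓝[>] 0) (𝓝[>] 0) := by
    refine tendsto_nhdsWithin_iff.2 ⟨tendsto_nhdsWithin_of_tendsto_nhds ?_,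
      eventually_mem_nhdsWithin.mono fun s hs => (one_sub_exp_neg_mem_Ioo hs).1⟩
    have hcont : Continuous fun s : ℝ => 1 - Real.exp (-s) := by fun_prop
    simpa only [neg_zero, Real.exp_zero, sub_self] using hcont.tendsto 0
  filter_upwards [hlim.eventually hΦ, eventually_mem_nhdsWithin] with s hs hs₀
  rwa [logProfile_of_pos Φ hs₀]

lemma boundedCausal_logProfile {Φ : ℝ → ℝ} {M : ℝ} (hΦm : Measurable Φ)
    (hΦ : MapsTo Φ (Ioo 0 1) (Icc 0 M)) : BoundedCausal (logProfile Φ) where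
  causal := causal_logProfile Φ
  measurable := (hΦm.comp (by fun_prop)).indicator measurableSet_Ioi
  bounded := by
    have hM := hΦ (show (2⁻¹ : ℝ) ∈ Ioo 0 1 by norm_num)
    refine ⟨M, fun t => ?_⟩
    obtain ⟨h₀, hle⟩ := logProfile_mem (left_mem_Icc.2 (hM.1.trans hM.2)) hΦ t
    rwa [Real.norm_of_nonneg h₀]

section Ansatz

variable {Φ : ℝ → ℝ}

lemma gfun_add_hfun_eq_convolution (hψ : BoundedCausal (logProfile Φ)) :
    gfun Φ + hfun Φ = logProfile Φ ⋆ (energyKernel + pressureKernel) := by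
  funext y
  rw [gfun_eq_convolution, hfun_eq_convolution, Pi.add_apply]
  exact ((hψ.convolutionExistsAt causal_energyKernel continuous_energyKernel.locallyIntegrable
    y).distrib_add (hψ.convolutionExistsAt causal_pressureKernel
      continuous_pressureKernel.locallyIntegrable y)).symm

lemma gfun_sub_three_mul_hfun_eq_convolution (hψ : BoundedCausal (logProfile Φ)) :
    (fun y => gfun Φ y - 3 * hfun Φ y) = logProfile Φ ⋆ traceKernel := by
  have hP := continuous_pressureKernel.locallyIntegrable (μ := volume)
  have hT := continuous_traceKernel.locallyIntegrable (μ := volume)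
  have h3P : Causal ((3 : ℝ) • pressureKernel) := fun t ht => by
    rw [Pi.smul_apply, causal_pressureKernel t ht, smul_zero]
  funext y
  have hsplit := (hψ.convolutionExistsAt h3P (hP.smul 3) y).distrib_add
    (hψ.convolutionExistsAt causal_traceKernel hT y)
  rw [gfun_eq_convolution, hfun_eq_convolution, energyKernel_eq, hsplit, convolution_smul,
    Pi.smul_apply, smul_eq_mul, add_sub_cancel_left]

lemma tendsto_gfun_add_hfun_div (hψ : BoundedCausal (logProfile Φ)) (hψ₀ : ∀ t, 0 ≤ logProfile Φ t)
    (hτ : ∀ y, 0 < y → 0 < (logProfile Φ ⋆ traceRateKernel) y) :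
    Tendsto (fun y => (gfun Φ y + hfun Φ y) / (logProfile Φ ⋆ traceRateKernel) y) (𝓝[>] 0)
      (𝓝 0) := by
  have hgh : ∀ y, gfun Φ y + hfun Φ y = (logProfile Φ ⋆ (energyKernel + pressureKernel)) y :=
    congrFun (gfun_add_hfun_eq_convolution hψ)
  have hbound : Tendsto (fun y => 4 / 3 * (Real.exp (2 * y) - 1)) (𝓝[>] 0) (𝓝 0) := by
    have hcont : Continuous fun y : ℝ => 4 / 3 * (Real.exp (2 * y) - 1) := by fun_prop
    have hlim := hcont.tendsto 0
    simp only [mul_zero, Real.exp_zero, sub_self] at hlim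
    exact tendsto_nhdsWithin_of_tendsto_nhds hlim
  refine tendsto_of_tendsto_of_tendsto_of_le_of_le' tendsto_const_nhds hbound ?_ ?_ <;>
    filter_upwards [eventually_mem_nhdsWithin] with y hy <;> rw [hgh]
  · refine div_nonneg ?_ (hτ y hy).le
    rw [convolution_lsmul]
    exact integral_nonneg fun s =>
      mul_nonneg (hψ₀ s) (causalPrimitive_pressureKernel.deriv_nonneg (y - s))
  · rw [div_le_iff₀ (hτ y hy)]
    refine hψ.convolution_le_mul_convolution hψ₀ causalPrimitive_pressureKernel.causal_deriv
      causalPrimitive_pressureKernel.locallyIntegrable causal_traceRateKernel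
      causalPrimitive_traceKernel.locallyIntegrable fun t ht => ?_
    refine (energyKernel_add_pressureKernel_le t).trans ?_
    have := causalPrimitive_traceKernel.deriv_nonneg t
    gcongr

lemma macroscopicSystem_gfun_hfun (hΦm : Measurable Φ) (hΦ₀ : ∀ η ∈ Ioo 0 1, 0 ≤ Φ η)
    (hΦb : BddAbove (Φ '' Ioo 0 1)) (hΦpos : ∀ᶠ η in 𝓝[>] 0, 0 < Φ η) :
    MacroscopicSystem (gfun Φ) (hfun Φ) (logProfile Φ ⋆ traceRateKernel) := by
  obtain ⟨M, hM⟩ := hΦb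
  have hψ := boundedCausal_logProfile hΦm fun η hη => ⟨hΦ₀ η hη, hM (mem_image_of_mem Φ hη)⟩
  have hψ₀ : ∀ t, 0 ≤ logProfile Φ t := logProfile_mem (S := Ici 0) self_mem_Ici hΦ₀
  obtain ⟨N, hN⟩ := hψ.bounded
  have hτ : ∀ y, 0 < y → 0 < (logProfile Φ ⋆ traceRateKernel) y := fun y =>
    hψ.convolution_pos hψ₀ (eventually_logProfile_pos hΦpos) causal_traceRateKernel
      causalPrimitive_traceKernel.locallyIntegrable fun _ => traceRateKernel_pos
  refine ⟨?_, ?_, fun y => ?_, fun y => ?_, ?_, hτ, ⟨N * (4 * Real.pi), fun y _ => ?_⟩,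
    tendsto_gfun_add_hfun_div hψ hψ₀ hτ⟩
  · exact gfun_eq_convolution Φ ▸ hψ.causal.convolution causal_energyKernel
  · exact hfun_eq_convolution Φ ▸ hψ.causal.convolution causal_pressureKernel
  · rw [← Pi.add_apply, gfun_add_hfun_eq_convolution hψ, hfun_eq_convolution]
    exact causalPrimitive_pressureKernel.hasDerivAt_convolution hψ y
  · rw [gfun_sub_three_mul_hfun_eq_convolution hψ]
    exact causalPrimitive_traceKernel.hasDerivAt_convolution hψ y
  · exact hψ.continuous_convolution causal_traceRateKernel
      causalPrimitive_traceKernel.locallyIntegrable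
  · have hN₀ : 0 ≤ N := (norm_nonneg _).trans (hN 0)
    calc (logProfile Φ ⋆ traceRateKernel) y ≤ N * traceKernel y :=
          causalPrimitive_traceKernel.convolution_le_mul hψ
            (fun t => (Real.le_norm_self _).trans (hN t)) y
      _ ≤ N * (4 * Real.pi * Real.exp (2 * y)) := by
          gcongr
          exact traceKernel_le y
      _ = N * (4 * Real.pi) * Real.exp (2 * y) := (mul_assoc _ _ _).symm

theorem stmt12_general (hΦm : Measurable Φ) (hΦ₀ : ∀ η ∈ Ioo 0 1, 0 ≤ Φ η)
    (hΦb : BddAbove (Φ '' Ioo 0 1)) (hΦpos : ∀ᶠ η in 𝓝[>] 0, 0 < Φ η) :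
    ContDiff ℝ 1 (gfun Φ) ∧ ContDiff ℝ 1 (hfun Φ) ∧
    (∀ y : ℝ, y ≤ 0 → gfun Φ y = 0 ∧ hfun Φ y = 0) ∧
    StrictMonoOn (gfun Φ) (Ici 0) ∧ StrictMonoOn (hfun Φ) (Ici 0) ∧
    Tendsto (gfun Φ) atTop atTop ∧ Tendsto (hfun Φ) atTop atTop ∧
    BijOn (gfun Φ) (Ici 0) (Ici 0) ∧
    ∃ P : ℝ → ℝ,
      (∀ y : ℝ, 0 ≤ y → P (gfun Φ y) = hfun Φ y) ∧
      ContDiffOn ℝ 1 P (Ici 0) ∧ P 0 = 0 ∧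
      (∀ ρ : ℝ, 0 < ρ → 0 < deriv P ρ ∧ deriv P ρ < 1 / 3) ∧
      ∃ C : ℝ, 0 < C ∧
        (∀ ρ : ℝ, 0 ≤ ρ → |P ρ - ρ / 3| ≤ C * √ρ) ∧
        BijOn P (Ici 0) (Ici 0) ∧
        (∀ q : ℝ, 0 < q → ∀ ρ : ℝ, 0 ≤ ρ → P ρ = q → |ρ - 3 * q| ≤ C * √q) := by
  have S := macroscopicSystem_gfun_hfun hΦm hΦ₀ hΦb hΦpos
  obtain ⟨C, hC, hle⟩ := S.exists_abs_sub_three_mul_equationOfState_le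
  refine ⟨S.contDiff_energy, S.contDiff_pressure,
    fun y hy => ⟨S.causal_energy y hy, S.causal_pressure y hy⟩,
    S.strictMonoOn_energy, S.strictMonoOn_pressure, S.tendsto_energy, S.tendsto_pressure,
    S.bijOn_energy, equationOfState (gfun Φ) (hfun Φ),
    fun y hy => equationOfState_apply S.bijOn_energy hy, S.contDiff_equationOfState.contDiffOn,
    S.equationOfState_zero, fun ρ hρ => S.deriv_equationOfState_mem_Ioo hρ, C, hC, fun ρ hρ => ?_,
    bijOn_equationOfState S.bijOn_energy S.bijOn_pressure, ?_⟩
  · exact S.abs_equationOfState_sub_third_le hC.le hρ (hle ρ hρ)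
  · rintro _ - ρ hρ rfl
    exact hle ρ hρ

end Ansatz

/-- Under assumption (Φ1), the induced `g` and `h` are `C¹`, vanish for
`y ≤ 0`, are strictly increasing on `[0,∞)` and tend to `∞`; `g` restricted to `[0,∞)` is a
bijection onto `[0,∞)`, and the macroscopic equation of state `P = h ∘ g⁻¹` satisfies
`P ∈ C¹([0,∞))`, `P(0) = 0`, `0 < P′ < 1/3` on `(0,∞)`, `|P(ρ) − ρ/3| ≤ C√ρ`, and is a
bijection of `[0,∞)` whose inverse satisfies `|P⁻¹(q) − 3q| ≤ C√q`. -/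
theorem stmt12 (Φ : ℝ → ℝ) (k c₁ c₂ η₀ : ℝ)
    (hk : k ∈ Set.Ioo (-(1/2) : ℝ) (3/2))
    (hc₁ : 0 < c₁) (hc₂ : 0 < c₂) (hη₀ : 0 < η₀)
    (hΦmeas : Measurable Φ)
    (hΦnonneg : ∀ η : ℝ, 0 ≤ Φ η)
    (hΦzero : ∀ η : ℝ, η ≤ 0 → Φ η = 0)
    (hΦloc : ∀ a : ℝ, 0 < a → ∃ M : ℝ, ∀ η ∈ Set.Icc (0:ℝ) a, Φ η ≤ M)
    (hΦasymp : ∀ η ∈ Set.Ioo (0:ℝ) η₀, c₁ * η ^ k ≤ Φ η ∧ Φ η ≤ c₂ * η ^ k) :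
    ContDiff ℝ 1 (gfun Φ) ∧ ContDiff ℝ 1 (hfun Φ) ∧
    (∀ y : ℝ, y ≤ 0 → gfun Φ y = 0 ∧ hfun Φ y = 0) ∧
    StrictMonoOn (gfun Φ) (Set.Ici 0) ∧ StrictMonoOn (hfun Φ) (Set.Ici 0) ∧
    Filter.Tendsto (gfun Φ) Filter.atTop Filter.atTop ∧
    Filter.Tendsto (hfun Φ) Filter.atTop Filter.atTop ∧
    Set.BijOn (gfun Φ) (Set.Ici 0) (Set.Ici 0) ∧
    ∃ P : ℝ → ℝ,
      (∀ y : ℝ, 0 ≤ y → P (gfun Φ y) = hfun Φ y) ∧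
      ContDiffOn ℝ 1 P (Set.Ici 0) ∧ P 0 = 0 ∧
      (∀ ρ : ℝ, 0 < ρ → 0 < deriv P ρ ∧ deriv P ρ < 1 / 3) ∧
      ∃ C : ℝ, 0 < C ∧
        (∀ ρ : ℝ, 0 ≤ ρ → |P ρ - ρ / 3| ≤ C * Real.sqrt ρ) ∧
        Set.BijOn P (Set.Ici 0) (Set.Ici 0) ∧
        (∀ q : ℝ, 0 < q → ∀ ρ : ℝ, 0 ≤ ρ → P ρ = q → |ρ - 3 * q| ≤ C * Real.sqrt q) := by
  refine stmt12_general hΦmeas (fun η _ => hΦnonneg η) ?_ ?_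
  · exact (hΦloc 1 one_pos).imp fun M hM => forall_mem_image.2 fun η hη => hM η ⟨hη.1.le, hη.2.le⟩
  · filter_upwards [Ioo_mem_nhdsGT hη₀] with η hη
    exact (mul_pos hc₁ (Real.rpow_pos_of_pos hη.1 k)).trans_le (hΦasymp η hη).1

end
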